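/- Let x ∈ ℝ, z₀ ∈ ℂ, 0 < R < R′, and let φ, g : ℂ → ℂ be complex-differentiable on the open ball B(z₀, R′). Let λ₁, …, λₙ be pairwise distinct points of B(z₀, R) and let ϑ(λ₁), …, ϑ(λₙ) be arbitrary complex numbers. Define the kernel V by V(λ, μ) = ϑ(λ) φ(λ) e^{−g(λ)} · [e^{ix(λ−μ)/2 + (g(λ)−g(μ))/2} − e^{−ix(λ−μ)/2 − (g(λ)−g(μ))/2}] / (2πi(λ − μ)) for λ ≠ μ, and V(λ, λ) = ϑ(λ) φ(λ) e^{−g(λ)} (ix + g′(λ)) / (2πi). Then (1/(2πi)^{2n}) ∮ … ∮ ∏_{j=1}^{n} [ϑ(λ_j) φ(λ_j) e^{ix(λ_j − z_j)} e^{−g(z_j)} / (λ_j − z_j)] · det[(z_k − λ_j)^{−1}]_{j,k=1}^{n} dz_n … dz_1 = det[V(λ_j, λ_k)]_{j,k=1}^{n}, where each variable z₁, …, zₙ is integrated once counterclockwise around the circle |z − z₀| = R. -/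

import Mathlib

open MeasureTheory

/-- Iterated counterclockwise contour integral over the circle `|z - c| = R`
in each of the `n` variables. -/
noncomputable def iterCircleIntegral : (n : ℕ) → ((Fin n → ℂ) → ℂ) → ℂ → ℝ → ℂ
  | 0, f, _, _ => f Fin.elim0
  | n + 1, f, c, R =>
      circleIntegral (fun z => iterCircleIntegral n (fun w => f (Fin.cons z w)) c R) c R


theorem iter_aux {ι : Type*} (s : Finset ι) (c : ℂ) (R : ℝ) (n : ℕ) :
    ∀ (a : ι → ℂ) (f : ι → Fin n → ℂ → ℂ), (∀ i k, CircleIntegrable (f i k) c R) →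
    iterCircleIntegral n (fun z => ∑ i ∈ s, a i * ∏ k, f i k (z k)) c R
      = ∑ i ∈ s, a i * ∏ k, circleIntegral (f i k) c R := by
  induction n with
  | zero => intro a f _; simp [iterCircleIntegral]
  | succ n ih =>
    intro a f hf
    have h1 : ∀ z, iterCircleIntegral n (fun w => (fun z : Fin (n+1) → ℂ =>
        ∑ i ∈ s, a i * ∏ k, f i k (z k)) (Fin.cons z w)) c R
        = ∑ i ∈ s, (a i * ∏ k : Fin n, circleIntegral (f i k.succ) c R) * f i 0 z := by
      intro z
      have := ih (fun i => a i * f i 0 z) (fun i k => f i k.succ) (fun i k => hf i k.succ)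
      simp only [Fin.prod_univ_succ, Fin.cons_zero, Fin.cons_succ]
      simp only [← mul_assoc]
      rw [this]
      exact Finset.sum_congr rfl fun i _ => by ring
    rw [iterCircleIntegral]
    simp only [h1]
    rw [circleIntegral.integral_fun_sum]
    · refine Finset.sum_congr rfl fun i _ => ?_
      rw [circleIntegral.integral_const_mul, Fin.prod_univ_succ]
      ring
    · intro i _
      exact (hf i 0).const_smul (a := (a i * ∏ k : Fin n, circleIntegral (f i k.succ) c R))

theorem two_pole (c : ℂ) (R R' : ℝ) (hR : 0 < R) (hRR' : R < R') (E : ℂ → ℂ)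
    (hE : DifferentiableOn ℂ E (Metric.ball c R')) (a b : ℂ)
    (ha : a ∈ Metric.ball c R) (hb : b ∈ Metric.ball c R) :
    CircleIntegrable (fun z => E z / ((z - a) * (z - b))) c R ∧
    circleIntegral (fun z => E z / ((z - a) * (z - b))) c R =
      2 * Real.pi * Complex.I * (if a = b then deriv E a else (E a - E b) / (a - b)) := by
  have hsub : Metric.closedBall c R ⊆ Metric.ball c R' := Metric.closedBall_subset_ball hRR'
  have hne : ∀ w ∈ Metric.ball c R, ∀ z ∈ Metric.sphere c R, z - w ≠ 0 := by
    intro w hw z hz h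
    rw [sub_eq_zero] at h
    subst h
    simp only [Metric.mem_ball, Metric.mem_sphere] at hw hz
    linarith
  have hcont : ContinuousOn E (Metric.sphere c R) :=
    hE.continuousOn.mono (Metric.sphere_subset_closedBall.trans hsub)
  have hD : DiffContOnCl ℂ E (Metric.ball c R) := by
    apply DifferentiableOn.diffContOnCl
    exact hE.mono (Metric.closure_ball_subset_closedBall.trans hsub)
  have hci : ∀ w ∈ Metric.ball c R, CircleIntegrable (fun z => (z - w)⁻¹ • E z) c R := by
    intro w hw
    apply ContinuousOn.circleIntegrable hR.le
    exact ContinuousOn.smul (ContinuousOn.inv₀ (by fun_prop) (hne w hw)) hcont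
  refine ⟨?_, ?_⟩
  · apply ContinuousOn.circleIntegrable hR.le
    exact hcont.div (by fun_prop) fun z hz => mul_ne_zero (hne a ha z hz) (hne b hb z hz)
  · split_ifs with h
    · subst h
      have := Complex.two_pi_I_inv_smul_circleIntegral_sub_sq_inv_smul_of_differentiable
        Metric.isOpen_ball hsub hE ha
      rw [← this, smul_eq_mul, mul_inv_cancel_left₀ Complex.two_pi_I_ne_zero]
      congr 1
      ext z
      rw [smul_eq_mul]; ring
    · have hab : a - b ≠ 0 := sub_ne_zero.2 h
      have e : circleIntegral (fun z => E z / ((z - a) * (z - b))) c R =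
          circleIntegral (fun z => (a - b)⁻¹ * ((z - a)⁻¹ • E z - (z - b)⁻¹ • E z)) c R := by
        apply circleIntegral.integral_congr hR.le
        intro z hz
        have h1 := hne a ha z hz
        have h2 := hne b hb z hz
        simp only [smul_eq_mul]
        field_simp
        ring
      rw [e, circleIntegral.integral_const_mul, circleIntegral.integral_sub (hci a ha) (hci b hb),
        hD.circleIntegral_sub_inv_smul ha, hD.circleIntegral_sub_inv_smul hb]
      simp only [smul_eq_mul]
      field_simp

theorem stmt1 (x : ℝ) (z₀ : ℂ) (R R' : ℝ) (hR : 0 < R) (hRR' : R < R')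
    (φ g : ℂ → ℂ)
    (hφ : DifferentiableOn ℂ φ (Metric.ball z₀ R'))
    (hg : DifferentiableOn ℂ g (Metric.ball z₀ R'))
    (n : ℕ) (lam : Fin n → ℂ) (hmem : ∀ j, lam j ∈ Metric.ball z₀ R)
    (hinj : Function.Injective lam)
    (ϑ : Fin n → ℂ)
    (V : Matrix (Fin n) (Fin n) ℂ)
    (hV : ∀ j k, V j k =
      if j = k then
        ϑ j * φ (lam j) * Complex.exp (-(g (lam j))) * (Complex.I * (x : ℂ) + deriv g (lam j)) /
          (2 * (Real.pi : ℂ) * Complex.I)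
      else
        ϑ j * φ (lam j) * Complex.exp (-(g (lam j))) *
          (Complex.exp (Complex.I * (x : ℂ) * (lam j - lam k) / 2 +
              (g (lam j) - g (lam k)) / 2) -
            Complex.exp (-(Complex.I * (x : ℂ) * (lam j - lam k)) / 2 -
              (g (lam j) - g (lam k)) / 2)) /
          (2 * (Real.pi : ℂ) * Complex.I * (lam j - lam k))) :
    (1 / (2 * (Real.pi : ℂ) * Complex.I)) ^ (2 * n) *
      iterCircleIntegral n (fun z => (∏ j, ϑ j * φ (lam j) *
          Complex.exp (Complex.I * (x : ℂ) * (lam j - z j)) *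
          Complex.exp (-(g (z j))) / (lam j - z j)) *
        Matrix.det (Matrix.of fun j k => (z k - lam j)⁻¹)) z₀ R = V.det := by
  set P : ℂ := 2 * (Real.pi : ℂ) * Complex.I with hP
  have hP0 : P ≠ 0 := Complex.two_pi_I_ne_zero
  set E : ℂ → ℂ := fun z => Complex.exp (-(Complex.I * x * z) - g z) with hEdef
  have hE : DifferentiableOn ℂ E (Metric.ball z₀ R') := by
    apply DifferentiableOn.cexp
    exact DifferentiableOn.sub (by fun_prop) hg
  have hE' : ∀ j, deriv E (lam j) = E (lam j) * (-(Complex.I * x) - deriv g (lam j)) := by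
    intro j
    have hgd : HasDerivAt g (deriv g (lam j)) (lam j) :=
      (hg.differentiableAt (Metric.isOpen_ball.mem_nhds
        (Metric.ball_subset_ball hRR'.le (hmem j)))).hasDerivAt
    have h1 : HasDerivAt (fun z : ℂ => -(Complex.I * x * z)) (-(Complex.I * x)) (lam j) := by
      have h2 := ((hasDerivAt_id' (lam j)).const_mul (Complex.I * (x : ℂ))).fun_neg
      rw [mul_one] at h2
      exact h2
    exact (h1.sub hgd).cexp.deriv
  -- the one-variable integrands
  set C : Fin n → ℂ := fun k => -(ϑ k * φ (lam k) * Complex.exp (Complex.I * x * lam k)) with hC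
  set F : Fin n → Fin n → ℂ → ℂ :=
    fun j k z => C k * (E z / ((z - lam k) * (z - lam j))) with hF
  have hFi : ∀ j k, CircleIntegrable (F j k) z₀ R := fun j k =>
    (two_pole z₀ R R' hR hRR' E hE _ _ (hmem k) (hmem j)).1.const_smul (a := C k)
  have hFv : ∀ j k, circleIntegral (F j k) z₀ R = C k * (P * (if lam k = lam j then
      deriv E (lam k) else (E (lam k) - E (lam j)) / (lam k - lam j))) := fun j k => by
    rw [hF, circleIntegral.integral_const_mul,
      (two_pole z₀ R R' hR hRR' E hE _ _ (hmem k) (hmem j)).2]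
  have hfun : (fun z : Fin n → ℂ => (∏ j, ϑ j * φ (lam j) *
          Complex.exp (Complex.I * (x : ℂ) * (lam j - z j)) *
          Complex.exp (-(g (z j))) / (lam j - z j)) *
        Matrix.det (Matrix.of fun j k => (z k - lam j)⁻¹)) =
      fun z => ∑ σ : Equiv.Perm (Fin n), ((Equiv.Perm.sign σ : ℤ) : ℂ) *
        ∏ k, F (σ k) k (z k) := by
    ext z
    rw [Matrix.det_apply', Finset.mul_sum]
    refine Finset.sum_congr rfl fun σ _ => ?_
    rw [mul_left_comm, ← Finset.prod_mul_distrib]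
    congr 1
    refine Finset.prod_congr rfl fun k _ => ?_
    have : Complex.exp (Complex.I * (x : ℂ) * (lam k - z k)) * Complex.exp (-(g (z k))) =
        Complex.exp (Complex.I * x * lam k) * E (z k) := by
      rw [hEdef]
      simp only [← Complex.exp_add]
      congr 1; ring
    rw [mul_assoc (ϑ k * φ (lam k)), this]
    simp only [hF, hC, Matrix.of_apply]
    rw [← neg_sub (z k) (lam k), div_neg, div_eq_mul_inv, div_eq_mul_inv, mul_inv]
    ring
  have hit := iter_aux (Finset.univ : Finset (Equiv.Perm (Fin n))) z₀ R n
    (fun σ => ((Equiv.Perm.sign σ : ℤ) : ℂ)) (fun σ k => F (σ k) k) (fun σ k => hFi (σ k) k)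
  rw [hfun, hit]
  clear hit hfun
  clear_value F
  set u : Fin n → ℂ := fun k => Complex.exp ((Complex.I * x * lam k + g (lam k)) / 2) with hu
  have hu0 : ∀ k, u k ≠ 0 := fun k => Complex.exp_ne_zero _
  have key : ∀ j k, (1 / P) ^ 2 * circleIntegral (F j k) z₀ R = (u j)⁻¹ * V k j * u k := by
    intro j k
    rw [hFv, hV]
    by_cases h : k = j
    · subst h
      have := hu0 k
      have e1 : Complex.exp (Complex.I * x * lam k) * E (lam k) = Complex.exp (-(g (lam k))) := by
        rw [hEdef]; simp only [← Complex.exp_add]; congr 1; ring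
      simp only [if_true]
      rw [hE', ← e1]
      simp only [hC]
      field_simp
      ring
    · have hl : lam k ≠ lam j := fun h' => h (hinj h')
      have hl' : lam k - lam j ≠ 0 := sub_ne_zero.2 hl
      simp only [if_neg h, if_neg hl]
      have e1 : Complex.exp (Complex.I * x * lam k) * (E (lam k) - E (lam j)) =
          -((u j)⁻¹ * (Complex.exp (-(g (lam k))) * (Complex.exp (Complex.I * (x : ℂ) *
            (lam k - lam j) / 2 + (g (lam k) - g (lam j)) / 2) -
            Complex.exp (-(Complex.I * (x : ℂ) * (lam k - lam j)) / 2 -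
              (g (lam k) - g (lam j)) / 2))) * u k) := by
        simp only [hEdef, hu, ← Complex.exp_neg, mul_sub, sub_mul, neg_sub, ← Complex.exp_add]
        congr 2 <;> ring
      have e2 : C k * (P * ((E (lam k) - E (lam j)) / (lam k - lam j))) =
         -(ϑ k * φ (lam k)) * P / (lam k - lam j) *
          (Complex.exp (Complex.I * x * lam k) * (E (lam k) - E (lam j))) := by
        simp only [hC]; ring
      rw [e2, e1]
      have := hu0 j
      field_simp
  have hM : (Matrix.of fun j k => (1 / P) ^ 2 * circleIntegral (F j k) z₀ R) =
      Matrix.diagonal (fun j => (u j)⁻¹) * V.transpose * Matrix.diagonal u := by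
    ext j k
    rw [Matrix.mul_diagonal, Matrix.diagonal_mul, Matrix.of_apply, key, Matrix.transpose_apply]
  have hdet : (Matrix.of fun j k => (1 / P) ^ 2 * circleIntegral (F j k) z₀ R).det = V.det := by
    rw [hM, Matrix.det_mul, Matrix.det_mul, Matrix.det_diagonal, Matrix.det_diagonal,
      Matrix.det_transpose, mul_right_comm, ← Finset.prod_mul_distrib]
    simp [hu0]
  rw [← hdet, Matrix.det_apply', Finset.mul_sum]
  refine Finset.sum_congr rfl fun σ _ => ?_
  simp only [Matrix.of_apply]
  rw [Finset.prod_mul_distrib, Finset.prod_const, Finset.card_univ, Fintype.card_fin, ← pow_mul]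
  ring
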